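/- Let α be an irrational real number and let (m_k) be given by the Master recursion. Then for every k ≥ 1 the nonlinear coefficients dominate the linear ones: m_k ≥ 1 / (D(1)·D(2)···D(k)). Consequently the radius of convergence of Σ_{k≥1} m_k x^k is at most the radius of convergence of Σ_{k≥1} x^k / (D(1)···D(k)). -/

import Mathlib

/-- `D α k = 2(1 - cos(2πkα))`, the small denominator of the Master recursion. -/
noncomputable def D (α : ℝ) (k : ℕ) : ℝ := 2 * (1 - Real.cos (2 * Real.pi * k * α))

theorem D_pos {α : ℝ} (hα : Irrational α) {k : ℕ} (hk : 1 ≤ k) : 0 < D α k := by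
  have hne : Real.cos (2 * Real.pi * k * α) ≠ 1 := by
    intro h
    obtain ⟨n, hn⟩ := (Real.cos_eq_one_iff _).1 h
    have hk' : k ≠ 0 := by lia
    refine (hα.natCast_mul hk').ne_int n ?_
    have hpi : 2 * Real.pi ≠ 0 := Real.two_pi_pos.ne'
    apply mul_left_cancel₀ hpi
    linarith
  have hlt := lt_of_le_of_ne (Real.cos_le_one _) hne
  unfold D
  linarith

/-- In a recursion `k F k = ∑ j m j F (k - j)` whose `m` is obtained from `F` by division by
positive numbers, all `F k` are nonnegative. -/
theorem masterRecursion_nonneg {d m F : ℕ → ℝ} (hd : ∀ k, 0 < d (k + 1)) (hF0 : F 0 = 1)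
    (hm : ∀ k, m (k + 1) = F k / d (k + 1))
    (hF : ∀ k : ℕ, 1 ≤ k →
      (k : ℝ) * F k = ∑ j ∈ Finset.Icc 1 k, (j : ℝ) * m j * F (k - j)) (k : ℕ) :
    0 ≤ F k := by
  induction k using Nat.strong_induction_on with
  | _ k ih =>
    rcases Nat.eq_zero_or_pos k with rfl | hk
    · simp [hF0]
    · have hkpos : (0 : ℝ) < k := by exact_mod_cast hk
      refine nonneg_of_mul_nonneg_right ?_ hkpos
      rw [hF k hk]
      refine Finset.sum_nonneg fun j hj => ?_
      obtain ⟨hj1, hjk⟩ := Finset.mem_Icc.1 hj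
      obtain ⟨i, rfl⟩ := Nat.exists_eq_add_of_le' hj1
      have hFi := ih i (by lia)
      have hFki := ih (k - (i + 1)) (by lia)
      have hdi := hd i
      rw [hm]
      positivity

/-- The last term of the recursion sum alone gives `m k ≤ F k`. -/
theorem masterRecursion_le {d m F : ℕ → ℝ} (hd : ∀ k, 0 < d (k + 1)) (hF0 : F 0 = 1)
    (hm : ∀ k, m (k + 1) = F k / d (k + 1))
    (hF : ∀ k : ℕ, 1 ≤ k →
      (k : ℝ) * F k = ∑ j ∈ Finset.Icc 1 k, (j : ℝ) * m j * F (k - j)) {k : ℕ} (hk : 1 ≤ k) :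
    m k ≤ F k := by
  have hF_nonneg := masterRecursion_nonneg hd hF0 hm hF
  have hkpos : (0 : ℝ) < k := by exact_mod_cast hk
  refine le_of_mul_le_mul_left ?_ hkpos
  have hsingle := Finset.single_le_sum (f := fun j : ℕ => (j : ℝ) * m j * F (k - j))
    (fun j hj => ?_) (Finset.mem_Icc.2 ⟨hk, le_rfl⟩)
  · simpa [hF k hk, hF0] using hsingle
  · obtain ⟨i, rfl⟩ := Nat.exists_eq_add_of_le' (Finset.mem_Icc.1 hj).1
    have hFi := hF_nonneg i
    have hFki := hF_nonneg (k - (i + 1))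
    have hdi := hd i
    simp only [hm]
    positivity

/-- the nonlinear coefficients dominate the linear ones,
`m_k ≥ 1/(D(1)⋯D(k))` for `k ≥ 1`; consequently wherever the series `Σ m_k r^k`
converges, so does `Σ r^k/(D(1)⋯D(k))` — i.e. the radius of convergence of
`Σ m_k x^k` is at most that of `Σ x^k/(D(1)⋯D(k))`. -/
theorem stmt5 (α : ℝ) (hα : Irrational α) (m F : ℕ → ℝ)
    (hm0 : m 0 = 0) (hF0 : F 0 = 1)
    (hm : ∀ k : ℕ, m (k + 1) = F k / D α (k + 1))
    (hF : ∀ k : ℕ, 1 ≤ k →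
      (k : ℝ) * F k = ∑ j ∈ Finset.Icc 1 k, (j : ℝ) * m j * F (k - j)) :
    (∀ k : ℕ, 1 ≤ k → 1 / (∏ j ∈ Finset.Icc 1 k, D α j) ≤ m k) ∧
    ∀ r : ℝ, 0 ≤ r → (Summable fun k : ℕ => m k * r ^ k) →
      Summable fun k : ℕ => (1 / ∏ j ∈ Finset.Icc 1 k, D α j) * r ^ k := by
  have hd : ∀ k, 0 < D α (k + 1) := fun k => D_pos hα (by lia)
  have hdom : ∀ k : ℕ, 1 ≤ k → 1 / (∏ j ∈ Finset.Icc 1 k, D α j) ≤ m k := by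
    intro k hk
    induction k, hk using Nat.le_induction with
    | base => simp [hm 0, hF0]
    | succ k hk ih =>
      rw [Finset.prod_Icc_succ_top (by lia), ← div_div, hm]
      exact div_le_div_of_nonneg_right
        (ih.trans (masterRecursion_le hd hF0 hm hF hk)) (hd k).le
  refine ⟨hdom, fun r hr hsum => ?_⟩
  rw [← summable_nat_add_iff 1] at hsum ⊢
  refine hsum.of_nonneg_of_le (fun k => ?_) fun k => ?_
  · have hprod : 0 < ∏ j ∈ Finset.Icc 1 (k + 1), D α j :=
      Finset.prod_pos fun j hj => D_pos hα (Finset.mem_Icc.1 hj).1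
    positivity
  · exact mul_le_mul_of_nonneg_right (hdom (k + 1) (by lia)) (by positivity)
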